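/- Let (t_k) be a sequence of positive reals with t_k → 0, for each k let (x^k,y^k) be a Karush–Kuhn–Tucker point of the Scholtes-type regularization S(t_k), and suppose (x^k,y^k) → (x̄,ȳ) where (x̄,ȳ) is a nondegenerate T-stationary point of the regularized continuous reformulation R. Then for all sufficiently large k the active inequality index sets coincide: Q0(x̄) = Q0(x^k). -/

import Mathlib

open scoped Classical
open Finset Filter Topology

noncomputable section
namespace Scholtes

/-- Vectors in ℝⁿ. -/
abbrev Vec (n : ℕ) := Fin n → ℝ

variable {n : ℕ} {P Q : Type*} [Fintype P] [Fintype Q]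

/-- Euclidean dot product. -/
def dot (u v : Vec n) : ℝ := ∑ i, u i * v i

/-- Gradient: vector of partial derivatives. -/
def grad (f : Vec n → ℝ) (x : Vec n) : Vec n := fun i => fderiv ℝ f x (Pi.single i 1)

/-- Hessian bilinear form of `L` at `z`, evaluated at directions `ξ`, `ζ`. -/
def hess (L : Vec n × Vec n → ℝ) (z ξ ζ : Vec n × Vec n) : ℝ :=
  fderiv ℝ (fun w => fderiv ℝ L w ξ) z ζ

/-- The pair vector (e_i, 0) ∈ ℝ²ⁿ. -/
def ex (i : Fin n) : Vec n × Vec n := (Pi.single i 1, 0)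

/-- The pair vector (0, e_i) ∈ ℝ²ⁿ. -/
def ey (i : Fin n) : Vec n × Vec n := (0, Pi.single i 1)

/-- The pair vector (0, e) ∈ ℝ²ⁿ, where e is the all-ones vector. -/
def eAll : Vec n × Vec n := (0, fun _ => 1)

/-- The pair vector (y_i e_i, x_i e_i) ∈ ℝ²ⁿ. -/
def hvec (x y : Vec n) (i : Fin n) : Vec n × Vec n := (Pi.single i (y i), Pi.single i (x i))

/-- The number of negative eigenvalues of the bilinear form `B` restricted to the
(sub)space `T`, expressed as the maximal dimension of a linear subspace of `T` on
which the associated quadratic form is negative definite. -/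
def negIndex (B : (Vec n × Vec n) → (Vec n × Vec n) → ℝ) (T : (Vec n × Vec n) → Prop) : ℕ :=
  sSup {d : ℕ | ∃ W : Submodule ℝ (Vec n × Vec n),
    (∀ ξ ∈ W, T ξ) ∧ Module.finrank ℝ W = d ∧ ∀ ξ ∈ W, ξ ≠ 0 → B ξ ξ < 0}

/-- The data and standing assumptions of the paper: objective `f`, equality
constraints `h`, inequality constraints `g`, positive pairwise different linear
coefficients `c`, cardinality bound `s` and regularization parameter `ε`. -/
structure Setting (n : ℕ) (P Q : Type*) [Fintype P] [Fintype Q] where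
  f : Vec n → ℝ
  h : P → Vec n → ℝ
  g : Q → Vec n → ℝ
  c : Vec n
  s : ℕ
  ε : ℝ
  hn : 1 ≤ n
  hf : ContDiff ℝ 2 f
  hh : ∀ p, ContDiff ℝ 2 (h p)
  hg : ∀ q, ContDiff ℝ 2 (g q)
  hcpos : ∀ i, 0 < c i
  hcinj : Function.Injective c
  hs : s < n
  hεpos : 0 < ε
  hεle : ε ≤ 1 / ((n : ℝ) - s)

/-- Index set a01: x̄_i = 0, ȳ_i > 0. -/
def a01 (x y : Vec n) : Finset (Fin n) := univ.filter fun i => x i = 0 ∧ 0 < y i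

/-- Index set a10: x̄_i ≠ 0, ȳ_i = 0. -/
def a10 (x y : Vec n) : Finset (Fin n) := univ.filter fun i => x i ≠ 0 ∧ y i = 0

/-- Index set a00: x̄_i = 0, ȳ_i = 0. -/
def a00 (x y : Vec n) : Finset (Fin n) := univ.filter fun i => x i = 0 ∧ y i = 0

/-- Index set N(y): y_i = 0. -/
def Nact (y : Vec n) : Finset (Fin n) := univ.filter fun i => y i = 0

/-- Index set H≥(x,y): x_i y_i = −t. -/
def Hge (t : ℝ) (x y : Vec n) : Finset (Fin n) := univ.filter fun i => x i * y i = -t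

/-- Index set H≤(x,y): x_i y_i = t. -/
def Hle (t : ℝ) (x y : Vec n) : Finset (Fin n) := univ.filter fun i => x i * y i = t

/-- Index set H(x,y) = H≥ ∪ H≤. -/
def Hact (t : ℝ) (x y : Vec n) : Finset (Fin n) := Hge t x y ∪ Hle t x y

/-- Active inequality constraints Q0(x). -/
def Q0 (D : Setting n P Q) (x : Vec n) : Finset Q := univ.filter fun q => D.g q x = 0

/-- Active upper bounds E(y): y_i = 1 + ε. -/
def Eact (D : Setting n P Q) (y : Vec n) : Finset (Fin n) := univ.filter fun i => y i = 1 + D.ε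

/-- Index set O(x,y) = complement of E(y) ∪ N(y) ∪ H(x,y). -/
def Oact (D : Setting n P Q) (t : ℝ) (x y : Vec n) : Finset (Fin n) :=
  (Eact D y ∪ Nact y ∪ Hact t x y)ᶜ

/-- Feasibility for the regularized continuous reformulation R. -/
def feasR (D : Setting n P Q) (x y : Vec n) : Prop :=
  (∀ p, D.h p x = 0) ∧ (∀ q, 0 ≤ D.g q x) ∧ ((n : ℝ) - D.s ≤ ∑ i, y i) ∧
  (∀ i, x i * y i = 0) ∧ (∀ i, 0 ≤ y i ∧ y i ≤ 1 + D.ε)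

/-- Feasibility for the Scholtes-type regularization S(t). -/
def feasS (D : Setting n P Q) (t : ℝ) (x y : Vec n) : Prop :=
  (∀ p, D.h p x = 0) ∧ (∀ q, 0 ≤ D.g q x) ∧ ((n : ℝ) - D.s ≤ ∑ i, y i) ∧
  (∀ i, -t ≤ x i * y i ∧ x i * y i ≤ t) ∧ (∀ i, 0 ≤ y i ∧ y i ≤ 1 + D.ε)

/-- Multipliers for T-stationarity (defined on the whole index ranges). -/
structure TMult (n : ℕ) (P Q : Type*) where
  lam : P → ℝ
  mu1 : Q → ℝ
  mu2 : Fin n → ℝ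
  mu3 : ℝ
  sig1 : Fin n → ℝ
  sig2 : Fin n → ℝ
  rho1 : Fin n → ℝ
  rho2 : Fin n → ℝ

/-- The T-stationarity equation (1) of Definition 2. -/
def TStatEq (D : Setting n P Q) (x y : Vec n) (M : TMult n P Q) : Prop :=
  ((grad D.f x, D.c) : Vec n × Vec n) =
    (∑ p, M.lam p • ((grad (D.h p) x, (0 : Vec n)) : Vec n × Vec n))
    + (∑ q ∈ Q0 D x, M.mu1 q • ((grad (D.g q) x, (0 : Vec n)) : Vec n × Vec n))
    - (∑ i ∈ Eact D y, M.mu2 i • ey i)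
    + M.mu3 • eAll
    + (∑ i ∈ a01 x y, M.sig1 i • ex i)
    + (∑ i ∈ a10 x y, M.sig2 i • ey i)
    + (∑ i ∈ a00 x y, (M.rho1 i • ex i + M.rho2 i • ey i))

/-- (x,y) is a T-stationary point of R with multipliers M. -/
def TStatAt (D : Setting n P Q) (x y : Vec n) (M : TMult n P Q) : Prop :=
  feasR D x y ∧
  (∀ q ∈ Q0 D x, 0 ≤ M.mu1 q) ∧
  (∀ i ∈ Eact D y, 0 ≤ M.mu2 i) ∧
  0 ≤ M.mu3 ∧
  M.mu3 * ((∑ i, y i) - ((n : ℝ) - D.s)) = 0 ∧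
  (∀ i ∈ a00 x y, M.rho1 i = 0 ∨ M.rho2 i ≤ 0) ∧
  TStatEq D x y M

/-- (x,y) is a T-stationary point of R. -/
def TStat (D : Setting n P Q) (x y : Vec n) : Prop := ∃ M, TStatAt D x y M

/-- MPOC-tailored LICQ at a feasible point (x,y) of R: the indicated family of
vectors in ℝ²ⁿ is linearly independent. -/
def MPOC_LICQ (D : Setting n P Q) (x y : Vec n) : Prop :=
  ∀ (lam : P → ℝ) (mu1 : Q → ℝ) (mu2 : Fin n → ℝ) (mu3 : ℝ) (s1 s2 : Fin n → ℝ),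
    ((∑ i, y i) ≠ (n : ℝ) - D.s → mu3 = 0) →
    (∑ p, lam p • ((grad (D.h p) x, (0 : Vec n)) : Vec n × Vec n))
    + (∑ q ∈ Q0 D x, mu1 q • ((grad (D.g q) x, (0 : Vec n)) : Vec n × Vec n))
    + (∑ i ∈ Eact D y, mu2 i • ey i)
    + mu3 • eAll
    + (∑ i ∈ a01 x y ∪ a00 x y, s1 i • ex i)
    + (∑ i ∈ a10 x y ∪ a00 x y, s2 i • ey i) = 0 →
    (∀ p, lam p = 0) ∧ (∀ q ∈ Q0 D x, mu1 q = 0) ∧ (∀ i ∈ Eact D y, mu2 i = 0) ∧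
    mu3 = 0 ∧ (∀ i ∈ a01 x y ∪ a00 x y, s1 i = 0) ∧ (∀ i ∈ a10 x y ∪ a00 x y, s2 i = 0)

/-- The Lagrange function L^R associated with the T-stationary point (x̄,ȳ)
and multipliers M. -/
def LagR (D : Setting n P Q) (xb yb : Vec n) (M : TMult n P Q) (z : Vec n × Vec n) : ℝ :=
  D.f z.1 + dot D.c z.2
    - (∑ p, M.lam p * D.h p z.1)
    - (∑ q ∈ Q0 D xb, M.mu1 q * D.g q z.1)
    + (∑ i ∈ Eact D yb, M.mu2 i * (z.2 i - (1 + D.ε)))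
    - M.mu3 * ((∑ i, z.2 i) - ((n : ℝ) - D.s))
    - (∑ i ∈ a01 xb yb, M.sig1 i * z.1 i)
    - (∑ i ∈ a10 xb yb, M.sig2 i * z.2 i)
    - (∑ i ∈ a00 xb yb, (M.rho1 i * z.1 i + M.rho2 i * z.2 i))

/-- Membership in the tangent space T^R at (x̄,ȳ). -/
def inTR (D : Setting n P Q) (x y : Vec n) (ξ : Vec n × Vec n) : Prop :=
  (∀ p, dot (grad (D.h p) x) ξ.1 = 0) ∧
  (∀ q ∈ Q0 D x, dot (grad (D.g q) x) ξ.1 = 0) ∧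
  (∀ i ∈ Eact D y, ξ.2 i = 0) ∧
  ((∑ i, y i) = (n : ℝ) - D.s → (∑ i, ξ.2 i) = 0) ∧
  (∀ i ∈ a00 x y ∪ a01 x y, ξ.1 i = 0) ∧
  (∀ i ∈ a00 x y ∪ a10 x y, ξ.2 i = 0)

/-- Nondegenerate T-stationary point with multipliers M (NDT1–NDT4). -/
def NondegTStatAt (D : Setting n P Q) (x y : Vec n) (M : TMult n P Q) : Prop :=
  TStatAt D x y M ∧
  MPOC_LICQ D x y ∧
  (∀ q ∈ Q0 D x, 0 < M.mu1 q) ∧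
  (∀ i ∈ Eact D y, 0 < M.mu2 i) ∧
  ((∑ i, y i) = (n : ℝ) - D.s → 0 < M.mu3) ∧
  (∀ i ∈ a00 x y, M.rho1 i ≠ 0 ∧ M.rho2 i < 0) ∧
  (∀ ξ, inTR D x y ξ → (∀ ζ, inTR D x y ζ → hess (LagR D x y M) (x, y) ξ ζ = 0) → ξ = 0)

/-- T-index: quadratic index (number of negative eigenvalues of the restricted
Hessian of L^R) plus the biactive index |a00|. -/
def TIndex (D : Setting n P Q) (x y : Vec n) (M : TMult n P Q) : ℕ :=
  negIndex (hess (LagR D x y M) (x, y)) (inTR D x y) + (a00 x y).card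

/-- Multipliers for KKT points of S(t) (defined on the whole index ranges). -/
structure SMult (n : ℕ) (P Q : Type*) where
  lam : P → ℝ
  mu1 : Q → ℝ
  mu2 : Fin n → ℝ
  mu3 : ℝ
  etaGe : Fin n → ℝ
  etaLe : Fin n → ℝ
  nu : Fin n → ℝ

/-- The KKT equation for S(t). -/
def KKTEq (D : Setting n P Q) (t : ℝ) (x y : Vec n) (M : SMult n P Q) : Prop :=
  ((grad D.f x, D.c) : Vec n × Vec n) =
    (∑ p, M.lam p • ((grad (D.h p) x, (0 : Vec n)) : Vec n × Vec n))
    + (∑ q ∈ Q0 D x, M.mu1 q • ((grad (D.g q) x, (0 : Vec n)) : Vec n × Vec n))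
    - (∑ i ∈ Eact D y, M.mu2 i • ey i)
    + M.mu3 • eAll
    + (∑ i ∈ Hge t x y, M.etaGe i • hvec x y i)
    - (∑ i ∈ Hle t x y, M.etaLe i • hvec x y i)
    + (∑ i ∈ Nact y, M.nu i • ey i)

/-- (x,y) is a KKT point of S(t) with multipliers M. -/
def KKTAt (D : Setting n P Q) (t : ℝ) (x y : Vec n) (M : SMult n P Q) : Prop :=
  feasS D t x y ∧
  (∀ q ∈ Q0 D x, 0 ≤ M.mu1 q) ∧
  (∀ i ∈ Eact D y, 0 ≤ M.mu2 i) ∧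
  0 ≤ M.mu3 ∧
  M.mu3 * ((∑ i, y i) - ((n : ℝ) - D.s)) = 0 ∧
  (∀ i ∈ Hge t x y, 0 ≤ M.etaGe i) ∧
  (∀ i ∈ Hle t x y, 0 ≤ M.etaLe i) ∧
  (∀ i ∈ Nact y, 0 ≤ M.nu i) ∧
  KKTEq D t x y M

/-- (x,y) is a KKT point of S(t). -/
def KKT (D : Setting n P Q) (t : ℝ) (x y : Vec n) : Prop := ∃ M, KKTAt D t x y M

/-- LICQ at a feasible point (x,y) of S(t). -/
def LICQ (D : Setting n P Q) (t : ℝ) (x y : Vec n) : Prop :=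
  ∀ (lam : P → ℝ) (mu1 : Q → ℝ) (mu2 : Fin n → ℝ) (mu3 : ℝ) (eta nu : Fin n → ℝ),
    ((∑ i, y i) ≠ (n : ℝ) - D.s → mu3 = 0) →
    (∑ p, lam p • ((grad (D.h p) x, (0 : Vec n)) : Vec n × Vec n))
    + (∑ q ∈ Q0 D x, mu1 q • ((grad (D.g q) x, (0 : Vec n)) : Vec n × Vec n))
    + (∑ i ∈ Eact D y, mu2 i • ey i)
    + mu3 • eAll
    + (∑ i ∈ Hact t x y, eta i • hvec x y i)
    + (∑ i ∈ Nact y, nu i • ey i) = 0 →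
    (∀ p, lam p = 0) ∧ (∀ q ∈ Q0 D x, mu1 q = 0) ∧ (∀ i ∈ Eact D y, mu2 i = 0) ∧
    mu3 = 0 ∧ (∀ i ∈ Hact t x y, eta i = 0) ∧ (∀ i ∈ Nact y, nu i = 0)

/-- The Lagrange function L^S associated with the KKT point (x̄,ȳ) of S(t)
and multipliers M. -/
def LagS (D : Setting n P Q) (t : ℝ) (xb yb : Vec n) (M : SMult n P Q)
    (z : Vec n × Vec n) : ℝ :=
  D.f z.1 + dot D.c z.2
    - (∑ p, M.lam p * D.h p z.1)
    - (∑ q ∈ Q0 D xb, M.mu1 q * D.g q z.1)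
    + (∑ i ∈ Eact D yb, M.mu2 i * (z.2 i - (1 + D.ε)))
    - M.mu3 * ((∑ i, z.2 i) - ((n : ℝ) - D.s))
    - (∑ i ∈ Hge t xb yb, M.etaGe i * (z.1 i * z.2 i + t))
    + (∑ i ∈ Hle t xb yb, M.etaLe i * (z.1 i * z.2 i - t))
    - (∑ i ∈ Nact yb, M.nu i * z.2 i)

/-- Membership in the tangent space T^S at (x,y) for S(t). -/
def inTS (D : Setting n P Q) (t : ℝ) (x y : Vec n) (ξ : Vec n × Vec n) : Prop :=
  (∀ p, dot (grad (D.h p) x) ξ.1 = 0) ∧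
  (∀ q ∈ Q0 D x, dot (grad (D.g q) x) ξ.1 = 0) ∧
  (∀ i ∈ Eact D y, ξ.2 i = 0) ∧
  ((∑ i, y i) = (n : ℝ) - D.s → (∑ i, ξ.2 i) = 0) ∧
  (∀ i ∈ Hact t x y, y i * ξ.1 i + x i * ξ.2 i = 0) ∧
  (∀ i ∈ Nact y, ξ.2 i = 0)

/-- Nondegenerate KKT point of S(t) with multipliers M (ND1–ND3). -/
def NondegKKTAt (D : Setting n P Q) (t : ℝ) (x y : Vec n) (M : SMult n P Q) : Prop :=
  KKTAt D t x y M ∧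
  LICQ D t x y ∧
  (∀ q ∈ Q0 D x, 0 < M.mu1 q) ∧
  (∀ i ∈ Eact D y, 0 < M.mu2 i) ∧
  (∀ i ∈ Hge t x y, 0 < M.etaGe i) ∧
  (∀ i ∈ Hle t x y, 0 < M.etaLe i) ∧
  (∀ i ∈ Nact y, 0 < M.nu i) ∧
  ((∑ i, y i) = (n : ℝ) - D.s → 0 < M.mu3) ∧
  (∀ ξ, inTS D t x y ξ → (∀ ζ, inTS D t x y ζ → hess (LagS D t x y M) (x, y) ξ ζ = 0) → ξ = 0)

/-- Quadratic index of a KKT point of S(t): number of negative eigenvalues of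
the restricted Hessian of L^S. -/
def QIdx (D : Setting n P Q) (t : ℝ) (x y : Vec n) (M : SMult n P Q) : ℕ :=
  negIndex (hess (LagS D t x y M) (x, y)) (inTS D t x y)

/-!
The inclusion `Q0 D (X k) ⊆ Q0 D xb` is continuity of `g`. For the other one, rescale or split the
gradients `(y i e_i, x i e_i)` of `x i * y i`, so that the KKT equation of S(t_k) expands
`(∇f (X k), c)` in a family of vectors that converges to the linearly independent family of
MPOC-LICQ. The coefficients then converge to those of the T-stationarity equation, so for large `k`
the multiplier of `g q` is positive like its limit, and hence `g q` is active at `X k`.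
-/

section LinearIndependence

variable {𝕜 J E : Type*} [NontriviallyNormedField 𝕜] [CompleteSpace 𝕜] [Fintype J]
  [NormedAddCommGroup E] [NormedSpace 𝕜 E]

lemma exists_eventually_norm_le_mul_norm_sum_smul {u : J → E} (hu : LinearIndependent 𝕜 u) :
    ∃ C, ∀ᶠ v in 𝓝 u, ∀ a : J → 𝕜, ‖a‖ ≤ C * ‖∑ j, a j • v j‖ := by
  obtain ⟨K, -, hanti⟩ := (Fintype.linearCombination 𝕜 u).exists_antilipschitzWith
    (LinearMap.ker_eq_bot.2 hu.fintypeLinearCombination_injective)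
  have hlower (a : J → 𝕜) : ‖a‖ ≤ K * ‖∑ j, a j • u j‖ := by
    simpa [Fintype.linearCombination_apply] using hanti.le_mul_dist a 0
  have hnear : ∀ᶠ v in 𝓝 u, K * ∑ j, ‖u j - v j‖ < 1 / 2 := by
    have hcont : Continuous fun v : J → E => K * ∑ j, ‖u j - v j‖ := by fun_prop
    exact hcont.continuousAt.eventually_lt_const (by simp)
  refine ⟨2 * K, hnear.mono fun v hv a => ?_⟩
  have hdiff : ‖∑ j, a j • (u j - v j)‖ ≤ ‖a‖ * ∑ j, ‖u j - v j‖ := by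
    rw [Finset.mul_sum]
    refine norm_sum_le_of_le _ fun j _ => ?_
    rw [norm_smul]
    gcongr
    exact norm_le_pi_norm a j
  have habsorb : ‖a‖ ≤ K * ‖∑ j, a j • v j‖ + ‖a‖ * (1 / 2) := calc
    ‖a‖ ≤ K * ‖∑ j, a j • v j + ∑ j, a j • (u j - v j)‖ := by
      simpa only [← Finset.sum_add_distrib, ← smul_add, add_sub_cancel] using hlower a
    _ ≤ K * (‖∑ j, a j • v j‖ + ‖a‖ * ∑ j, ‖u j - v j‖) := by
      gcongr
      exact (norm_add_le _ _).trans (by gcongr)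
    _ = K * ‖∑ j, a j • v j‖ + ‖a‖ * (K * ∑ j, ‖u j - v j‖) := by ring
    _ ≤ K * ‖∑ j, a j • v j‖ + ‖a‖ * (1 / 2) := by gcongr
  linarith

lemma tendsto_coeff_of_tendsto_sum_smul {ι : Type*} {l : Filter ι} {v : ι → J → E} {u : J → E}
    {a : ι → J → 𝕜} {b : J → 𝕜} (hu : LinearIndependent 𝕜 u) (hv : Tendsto v l (𝓝 u))
    (hsum : Tendsto (fun k => ∑ j, a k j • v k j) l (𝓝 (∑ j, b j • u j))) :
    Tendsto a l (𝓝 b) := by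
  obtain ⟨C, hC⟩ := exists_eventually_norm_le_mul_norm_sum_smul hu
  have hb : Tendsto (fun k => ∑ j, b j • v k j) l (𝓝 (∑ j, b j • u j)) :=
    tendsto_finsetSum _ fun j _ => (tendsto_pi_nhds.1 hv j).const_smul (b j)
  have hdiff : Tendsto (fun k => C * ‖∑ j, (a k - b) j • v k j‖) l (𝓝 0) := by
    simpa [sub_smul, Finset.sum_sub_distrib] using (hsum.sub hb).norm.const_mul C
  rw [tendsto_iff_norm_sub_tendsto_zero]
  exact squeeze_zero' (Eventually.of_forall fun k => norm_nonneg _)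
    ((hv.eventually hC).mono fun k hk => hk (a k - b)) hdiff

end LinearIndependence

/-- Labels of the constraints of R whose gradients enter MPOC-LICQ: `h p = 0`, `g q ≥ 0`,
`y i ≤ 1 + ε`, `n - s ≤ ∑ i, y i`, and the two factors `x i = 0` and `y i = 0` of the
complementarity constraints. -/
inductive MPOCIndex (n : ℕ) (P Q : Type*)
  | eq (p : P)
  | ineq (q : Q)
  | upper (i : Fin n)
  | card
  | x (i : Fin n)
  | y (i : Fin n)

/-- The constraints of R active at `(x, y)`, that is, the index set of the family in MPOC-LICQ. -/
def mpocActive (D : Setting n P Q) (x y : Vec n) : Finset (MPOCIndex n P Q) :=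
  univ.image .eq ∪ (Q0 D x).image .ineq ∪ (Eact D y).image .upper
    ∪ (if ∑ i, y i = (n : ℝ) - D.s then {.card} else ∅)
    ∪ (a01 x y ∪ a00 x y).image .x ∪ (a10 x y ∪ a00 x y).image .y

/-- A family of vectors continuous in `z` at `(xb, yb)` which is the MPOC-LICQ family at
`z = (xb, yb)` and, for `z` near `(xb, yb)`, spans a space containing the gradients of the
constraints of S(t) active at `z`, whatever `t`. To this end the gradient `(y i e_i, x i e_i)` of
`x i * y i` is rescaled to `(e_i, (x i / y i) e_i)` if `yb i ≠ 0`, to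
`((y i / x i) e_i, e_i)` if `xb i ≠ 0`, and split into its two components if `xb i = yb i = 0`. -/
def mpocVec (D : Setting n P Q) (xb yb : Vec n) (z : Vec n × Vec n) :
    MPOCIndex n P Q → Vec n × Vec n
  | .eq p => (grad (D.h p) z.1, 0)
  | .ineq q => (grad (D.g q) z.1, 0)
  | .upper i => ey i
  | .card => eAll
  | .x i => (Pi.single i 1, Pi.single i (if yb i = 0 then 0 else z.1 i / z.2 i))
  | .y i => (Pi.single i (if xb i = 0 then 0 else z.2 i / z.1 i), Pi.single i 1)

/-- The multipliers of a T-stationary point as coefficients of the MPOC-LICQ family. -/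
def TMult.mpocCoeff {P Q : Type*} (M : TMult n P Q) (x y : Vec n) : MPOCIndex n P Q → ℝ
  | .eq p => M.lam p
  | .ineq q => M.mu1 q
  | .upper i => -M.mu2 i
  | .card => M.mu3
  | .x i => if i ∈ a01 x y then M.sig1 i else M.rho1 i
  | .y i => if i ∈ a10 x y then M.sig2 i else M.rho2 i

/-- The signed multiplier of the constraints `-t ≤ x i * y i ≤ t`, extended by zero to the indices
for which both are inactive. -/
def SMult.eta {P Q : Type*} (M : SMult n P Q) (t : ℝ) (x y : Vec n) (i : Fin n) : ℝ :=
  (if i ∈ Hge t x y then M.etaGe i else 0) - (if i ∈ Hle t x y then M.etaLe i else 0)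

/-- The multipliers of a KKT point `(x, y)` of S(t), extended by zero to inactive constraints, as
coefficients of the family `mpocVec`. -/
def SMult.mpocCoeff (M : SMult n P Q) (D : Setting n P Q) (t : ℝ) (x y : Vec n) :
    MPOCIndex n P Q → ℝ
  | .eq p => M.lam p
  | .ineq q => if q ∈ Q0 D x then M.mu1 q else 0
  | .upper i => -(if i ∈ Eact D y then M.mu2 i else 0)
  | .card => M.mu3
  | .x i => y i * M.eta t x y i
  | .y i => x i * M.eta t x y i + if i ∈ Nact y then M.nu i else 0

/-- Every equation among `g q x = 0`, `y i = 1 + ε`, `∑ i, y i = n - s`, `x i = 0`, `y i = 0` that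
holds at `(x, y)` holds at `(xb, yb)`. The equations `x i * y i = ± t` are left out, since they
change with `t`. -/
structure ActiveSubset (D : Setting n P Q) (x y xb yb : Vec n) : Prop where
  Q0_subset : Q0 D x ⊆ Q0 D xb
  Eact_subset : Eact D y ⊆ Eact D yb
  sum_eq : ∑ i, y i = (n : ℝ) - D.s → ∑ i, yb i = (n : ℝ) - D.s
  x_eq_zero : ∀ i, x i = 0 → xb i = 0
  y_eq_zero : ∀ i, y i = 0 → yb i = 0

lemma eventually_activeSubset (D : Setting n P Q) (xb yb : Vec n) :
    ∀ᶠ z in 𝓝 (xb, yb), ActiveSubset D z.1 z.2 xb yb := by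
  have imp {φ : Vec n × Vec n → ℝ} (hφ : Continuous φ) (a : ℝ) :
      ∀ᶠ z in 𝓝 (xb, yb), φ z = a → φ (xb, yb) = a := by
    by_cases h : φ (xb, yb) = a
    · exact Eventually.of_forall fun _ _ => h
    · exact (hφ.continuousAt.eventually_ne h).mono fun _ hz hza => absurd hza hz
  have hQ (q : Q) := imp ((D.hg q).continuous.comp continuous_fst) 0
  have hE (i : Fin n) := imp (φ := fun z => z.2 i) (by fun_prop) (1 + D.ε)
  have hx (i : Fin n) := imp (φ := fun z => z.1 i) (by fun_prop) 0
  have hy (i : Fin n) := imp (φ := fun z => z.2 i) (by fun_prop) 0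
  filter_upwards [eventually_all.2 hQ, eventually_all.2 hE, eventually_all.2 hx,
    eventually_all.2 hy, imp (φ := fun z => ∑ i, z.2 i) (by fun_prop) (n - D.s)]
    with z hQ hE hx hy hs
  exact ⟨fun q hq => by simpa [Q0] using hQ q (by simpa [Q0] using hq),
    fun i hi => by simpa [Eact] using hE i (by simpa [Eact] using hi), hs, hx, hy⟩

lemma mem_a01_union_a00 {x y : Vec n} {i : Fin n} (hy : 0 ≤ y i) :
    i ∈ a01 x y ∪ a00 x y ↔ x i = 0 := by
  rcases hy.eq_or_lt with h | h
  · simp [a01, a00, ← h]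
  · simp [a01, a00, h, h.ne']

lemma mem_a10_union_a00 {x y : Vec n} {i : Fin n} : i ∈ a10 x y ∪ a00 x y ↔ y i = 0 := by
  simp only [a10, a00, mem_union, mem_filter, mem_univ, true_and]
  tauto

lemma continuous_grad {f : Vec n → ℝ} (hf : ContDiff ℝ 1 f) : Continuous (grad f) :=
  continuous_pi fun _ => (hf.continuous_fderiv one_ne_zero).clm_apply continuous_const

lemma continuousAt_mpocVec (D : Setting n P Q) (xb yb : Vec n) (j : MPOCIndex n P Q) :
    ContinuousAt (fun z => mpocVec D xb yb z j) (xb, yb) := by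
  have hgrad {φ : Vec n → ℝ} (hφ : ContDiff ℝ 2 φ) :
      ContinuousAt (fun z : Vec n × Vec n => (grad φ z.1, (0 : Vec n))) (xb, yb) :=
    (((continuous_grad (hφ.of_le one_le_two)).comp continuous_fst).prodMk
      continuous_const).continuousAt
  have hratio {φ ψ : Vec n × Vec n → ℝ} (hφ : Continuous φ) (hψ : Continuous ψ) (i : Fin n) :
      ContinuousAt (fun z => (Pi.single i (if ψ (xb, yb) = 0 then 0 else φ z / ψ z) : Vec n))
        (xb, yb) := by
    refine (continuous_single i).continuousAt.comp ?_
    split_ifs with h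
    · exact continuousAt_const
    · exact hφ.continuousAt.div hψ.continuousAt h
  rcases j with p | q | i | - | i | i
  · exact hgrad (D.hh p)
  · exact hgrad (D.hg q)
  · exact continuousAt_const
  · exact continuousAt_const
  · exact continuousAt_const.prodMk
      (hratio (φ := fun z => z.1 i) (ψ := fun z => z.2 i) (by fun_prop) (by fun_prop) i)
  · exact (hratio (φ := fun z => z.2 i) (ψ := fun z => z.1 i) (by fun_prop) (by fun_prop)
      i).prodMk continuousAt_const

lemma sum_mpocActive {E : Type*} [AddCommMonoid E] (D : Setting n P Q) (x y : Vec n)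
    (F : MPOCIndex n P Q → E) :
    ∑ j ∈ mpocActive D x y, F j = ∑ p, F (.eq p) + ∑ q ∈ Q0 D x, F (.ineq q)
      + ∑ i ∈ Eact D y, F (.upper i)
      + (if ∑ i, y i = (n : ℝ) - D.s then F .card else 0)
      + ∑ i ∈ a01 x y ∪ a00 x y, F (.x i)
      + ∑ i ∈ a10 x y ∪ a00 x y, F (.y i) := by
  have hcard : ∑ j ∈ (if ∑ i, y i = (n : ℝ) - D.s then {.card} else ∅), F j =
      if ∑ i, y i = (n : ℝ) - D.s then F .card else 0 := by
    split_ifs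
    exacts [sum_singleton F _, sum_empty]
  rw [mpocActive, sum_union, sum_union, sum_union, sum_union, sum_union, hcard,
    sum_image fun _ _ _ _ => MPOCIndex.eq.inj, sum_image fun _ _ _ _ => MPOCIndex.ineq.inj,
    sum_image fun _ _ _ _ => MPOCIndex.upper.inj, sum_image fun _ _ _ _ => MPOCIndex.x.inj,
    sum_image fun _ _ _ _ => MPOCIndex.y.inj]
  all_goals
    rw [disjoint_left]
    by_cases hactive : ∑ i, y i = (n : ℝ) - D.s <;>
      rintro (_ | _ | _ | _ | _ | _) <;> simp [hactive]

lemma sum_smul_mpocVec_self (D : Setting n P Q) (x y : Vec n) (a : MPOCIndex n P Q → ℝ) :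
    ∑ j ∈ mpocActive D x y, a j • mpocVec D x y (x, y) j =
      ∑ p, a (.eq p) • (grad (D.h p) x, (0 : Vec n))
      + ∑ q ∈ Q0 D x, a (.ineq q) • (grad (D.g q) x, (0 : Vec n))
      + ∑ i ∈ Eact D y, a (.upper i) • ey i
      + (if ∑ i, y i = (n : ℝ) - D.s then a .card else 0) • eAll
      + ∑ i ∈ a01 x y ∪ a00 x y, a (.x i) • ex i
      + ∑ i ∈ a10 x y ∪ a00 x y, a (.y i) • ey i := by
  have hex : ∀ i ∈ a01 x y ∪ a00 x y, mpocVec D x y (x, y) (.x i) = ex i := fun i hi => by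
    have hx : x i = 0 := by
      rcases mem_union.1 hi with h | h
      exacts [(mem_filter.1 h).2.1, (mem_filter.1 h).2.1]
    simp [mpocVec, ex, hx]
  have hey : ∀ i ∈ a10 x y ∪ a00 x y, mpocVec D x y (x, y) (.y i) = ey i := fun i hi => by
    simp [mpocVec, ey, mem_a10_union_a00.1 hi]
  rw [sum_mpocActive, Finset.sum_congr rfl fun i hi => congrArg _ (hex i hi),
    Finset.sum_congr (s₁ := a10 x y ∪ a00 x y) rfl fun i hi => congrArg _ (hey i hi), ite_smul,
    zero_smul]
  rfl

lemma MPOC_LICQ.linearIndependent {D : Setting n P Q} {x y : Vec n} (h : MPOC_LICQ D x y) :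
    LinearIndependent ℝ fun j : mpocActive D x y => mpocVec D x y (x, y) j := by
  refine linearIndepOn_finset_iff.2 fun a ha j hj => ?_
  rw [sum_smul_mpocVec_self] at ha
  obtain ⟨hh, hg, hE, hsum, hx, hy⟩ := h _ _ _ _ _ _ (fun hne => if_neg hne) ha
  clear ha
  by_cases hactive : ∑ i, y i = (n : ℝ) - D.s <;> cases j <;> simp_all [mpocActive]

lemma TStatAt.eq_sum_mpocVec {D : Setting n P Q} {x y : Vec n} {M : TMult n P Q}
    (h : TStatAt D x y M) :
    (grad D.f x, D.c) = ∑ j ∈ mpocActive D x y, M.mpocCoeff x y j • mpocVec D x y (x, y) j := by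
  obtain ⟨-, -, -, -, hcompl, -, heq⟩ := h
  have hmu3 : (if ∑ i, y i = (n : ℝ) - D.s then M.mu3 else 0) = M.mu3 :=
    ite_eq_left_iff.2 fun hs => ((mul_eq_zero.1 hcompl).resolve_right (sub_ne_zero.2 hs)).symm
  have hdisj1 : Disjoint (a01 x y) (a00 x y) :=
    disjoint_filter.2 fun i _ h01 h00 => h01.2.ne' h00.2
  have hdisj2 : Disjoint (a10 x y) (a00 x y) :=
    disjoint_filter.2 fun i _ h10 h00 => h10.1 h00.1
  have hsplit {S T : Finset (Fin n)} (hST : Disjoint S T) (α β : Fin n → ℝ)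
      (e : Fin n → Vec n × Vec n) :
      ∑ i ∈ S ∪ T, (if i ∈ S then α i else β i) • e i =
        ∑ i ∈ S, α i • e i + ∑ i ∈ T, β i • e i := by
    rw [sum_union hST]
    congr 1
    · exact sum_congr rfl fun i hi => by rw [if_pos hi]
    · exact sum_congr rfl fun i hi => by rw [if_neg (disjoint_right.1 hST hi)]
  rw [sum_smul_mpocVec_self, heq]
  simp only [TMult.mpocCoeff, hmu3, hsplit hdisj1, hsplit hdisj2, neg_smul, sum_neg_distrib,
    sum_add_distrib]
  abel

lemma KKTEq.fst_apply {D : Setting n P Q} {t : ℝ} {x y : Vec n} {M : SMult n P Q}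
    (h : KKTEq D t x y M) (j : Fin n) :
    grad D.f x j = ∑ p, M.lam p * grad (D.h p) x j + ∑ q ∈ Q0 D x, M.mu1 q * grad (D.g q) x j
      + y j * M.eta t x y j := by
  have hcoord := congrFun (congrArg Prod.fst h) j
  simp only [Prod.smul_mk, smul_zero, ey, eAll, hvec, Prod.fst_add, Prod.fst_sub, Prod.fst_sum,
    sum_const_zero, sub_zero, add_zero, Pi.add_apply, Pi.sub_apply, Finset.sum_apply,
    Pi.smul_apply, smul_eq_mul, Pi.single_apply, mul_ite, mul_zero, sum_ite_eq,
    Pi.zero_apply] at hcoord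
  rw [hcoord, SMult.eta]
  split_ifs <;> ring

lemma KKTEq.snd_apply {D : Setting n P Q} {t : ℝ} {x y : Vec n} {M : SMult n P Q}
    (h : KKTEq D t x y M) (j : Fin n) :
    D.c j = -(if j ∈ Eact D y then M.mu2 j else 0) + M.mu3
      + (x j * M.eta t x y j + if j ∈ Nact y then M.nu j else 0) := by
  have hcoord := congrFun (congrArg Prod.snd h) j
  simp only [Prod.smul_mk, smul_zero, ey, eAll, hvec, Prod.snd_add, Prod.snd_sub, Prod.snd_sum,
    sum_const_zero, add_zero, zero_sub, Pi.add_apply, Pi.sub_apply, Pi.neg_apply,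
    Finset.sum_apply, Pi.smul_apply, Pi.single_apply, smul_eq_mul, mul_ite, mul_one, mul_zero,
    sum_ite_eq] at hcoord
  rw [hcoord, SMult.eta]
  split_ifs <;> ring

lemma sum_smul_mpocVec_fst_apply {D : Setting n P Q} {xb yb : Vec n} (hfeas : feasR D xb yb)
    (z : Vec n × Vec n) (a : MPOCIndex n P Q → ℝ) (j : Fin n) :
    (∑ i ∈ mpocActive D xb yb, a i • mpocVec D xb yb z i).1 j =
      ∑ p, a (.eq p) * grad (D.h p) z.1 j + ∑ q ∈ Q0 D xb, a (.ineq q) * grad (D.g q) z.1 j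
      + if xb j = 0 then a (.x j) else a (.y j) * (z.2 j / z.1 j) := by
  obtain ⟨-, -, -, hxy, hyb⟩ := hfeas
  have hy : xb j ≠ 0 → yb j = 0 := fun hx => (mul_eq_zero.1 (hxy j)).resolve_left hx
  rw [sum_mpocActive, ← ite_zero_smul]
  simp only [mpocVec, Prod.smul_mk, smul_zero, ey, eAll, Prod.fst_add, Prod.fst_sum,
    sum_const_zero, add_zero, Pi.add_apply, Finset.sum_apply, Pi.smul_apply, smul_eq_mul,
    Pi.single_apply, mul_ite, mul_one, mul_zero, sum_ite_eq, mem_a01_union_a00 (hyb _).1,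
    mem_a10_union_a00]
  split_ifs <;> simp_all [add_assoc]

lemma sum_smul_mpocVec_snd_apply {D : Setting n P Q} {xb yb : Vec n} (hfeas : feasR D xb yb)
    (z : Vec n × Vec n) (a : MPOCIndex n P Q → ℝ) (j : Fin n) :
    (∑ i ∈ mpocActive D xb yb, a i • mpocVec D xb yb z i).2 j =
      (if j ∈ Eact D yb then a (.upper j) else 0)
      + (if ∑ i, yb i = (n : ℝ) - D.s then a .card else 0)
      + if yb j = 0 then a (.y j) else a (.x j) * (z.1 j / z.2 j) := by
  obtain ⟨-, -, -, hxy, hyb⟩ := hfeas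
  have hx : yb j ≠ 0 → xb j = 0 := fun hy => (mul_eq_zero.1 (hxy j)).resolve_right hy
  rw [sum_mpocActive, ← ite_zero_smul]
  simp only [mpocVec, Prod.smul_mk, smul_zero, ey, eAll, Prod.snd_add, Prod.snd_sum,
    sum_const_zero, zero_add, Pi.add_apply, Finset.sum_apply, Pi.smul_apply, smul_eq_mul,
    Pi.single_apply, mul_ite, mul_one, mul_zero, sum_ite_eq, mem_a01_union_a00 (hyb _).1,
    mem_a10_union_a00]
  split_ifs <;> simp_all [add_assoc]

lemma KKTAt.eq_sum_mpocVec {D : Setting n P Q} {t : ℝ} {x y xb yb : Vec n} {M : SMult n P Q}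
    (h : KKTAt D t x y M) (hfeas : feasR D xb yb) (hact : ActiveSubset D x y xb yb) :
    (grad D.f x, D.c) =
      ∑ j ∈ mpocActive D xb yb, M.mpocCoeff D t x y j • mpocVec D xb yb (x, y) j := by
  obtain ⟨-, -, -, -, hcompl, -, -, -, heq⟩ := h
  ext j
  · refine (heq.fst_apply j).trans ?_
    rw [sum_smul_mpocVec_fst_apply hfeas]
    simp only [SMult.mpocCoeff, ite_mul, zero_mul, sum_ite_mem, inter_eq_right.2 hact.Q0_subset]
    congr 1
    split_ifs with hxb hy
    · rfl
    · simp [(mem_filter.1 hy).2]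
    · have hx : x j ≠ 0 := fun hx => hxb (hact.x_eq_zero j hx)
      field_simp
      ring
  · refine (heq.snd_apply j).trans ?_
    rw [sum_smul_mpocVec_snd_apply hfeas]
    simp only [SMult.mpocCoeff]
    congr 1
    · congr 1
      · symm
        exact ite_eq_left_iff.2 fun hE => by simp [mt (@hact.Eact_subset j) hE]
      · refine (ite_eq_left_iff.2 fun hs => ?_).symm
        exact ((mul_eq_zero.1 hcompl).resolve_right
          (sub_ne_zero.2 (mt hact.sum_eq hs))).symm
    · split_ifs with hN hyb hyb
      · rfl
      · exact absurd (hact.y_eq_zero j (mem_filter.1 hN).2) hyb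
      · rfl
      · have hy : y j ≠ 0 := fun hy => hyb (hact.y_eq_zero j hy)
        field_simp
        ring

lemma tendsto_mpocCoeff {ι : Type*} {l : Filter ι} {D : Setting n P Q} {t : ι → ℝ}
    {X Y : ι → Vec n} {M : ι → SMult n P Q} (hK : ∀ k, KKTAt D (t k) (X k) (Y k) (M k))
    {xb yb : Vec n} (hconv : Tendsto (fun k => (X k, Y k)) l (𝓝 (xb, yb))) {Mb : TMult n P Q}
    (hstat : TStatAt D xb yb Mb) (hlicq : MPOC_LICQ D xb yb) {j : MPOCIndex n P Q}
    (hj : j ∈ mpocActive D xb yb) :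
    Tendsto (fun k => (M k).mpocCoeff D (t k) (X k) (Y k) j) l (𝓝 (Mb.mpocCoeff xb yb j)) := by
  have hvec : Tendsto (fun k (i : mpocActive D xb yb) => mpocVec D xb yb (X k, Y k) i) l
      (𝓝 fun i => mpocVec D xb yb (xb, yb) i) :=
    tendsto_pi_nhds.2 fun i => (continuousAt_mpocVec D xb yb i).tendsto.comp hconv
  have hgrad : Tendsto (fun k => (grad D.f (X k), D.c)) l (𝓝 (grad D.f xb, D.c)) :=
    (((continuous_grad (D.hf.of_le one_le_two)).tendsto xb).comp hconv.fst_nhds).prodMk_nhds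
      tendsto_const_nhds
  have hsum : Tendsto
      (fun k => ∑ i : mpocActive D xb yb,
        (M k).mpocCoeff D (t k) (X k) (Y k) i • mpocVec D xb yb (X k, Y k) i) l
      (𝓝 (∑ i : mpocActive D xb yb, Mb.mpocCoeff xb yb i • mpocVec D xb yb (xb, yb) i)) := by
    simp_rw [Finset.sum_coe_sort (mpocActive D xb yb)
      fun i => Mb.mpocCoeff xb yb i • mpocVec D xb yb (xb, yb) i, ← hstat.eq_sum_mpocVec]
    refine hgrad.congr' ?_
    filter_upwards [hconv.eventually (eventually_activeSubset D xb yb)] with k hk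
    rw [(hK k).eq_sum_mpocVec hstat.1 hk, ← Finset.sum_coe_sort]
  exact tendsto_pi_nhds.1
    (tendsto_coeff_of_tendsto_sum_smul hlicq.linearIndependent hvec hsum) ⟨j, hj⟩

theorem statement10_general {ι : Type*} {l : Filter ι} (D : Setting n P Q) (t : ι → ℝ)
    (X Y : ι → Vec n) (hK : ∀ k, KKT D (t k) (X k) (Y k)) (xb yb : Vec n)
    (hconv : Tendsto (fun k => (X k, Y k)) l (𝓝 (xb, yb))) (Mb : TMult n P Q)
    (hstat : TStatAt D xb yb Mb) (hlicq : MPOC_LICQ D xb yb) (hmu : ∀ q ∈ Q0 D xb, 0 < Mb.mu1 q) :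
    ∀ᶠ k in l, Q0 D xb = Q0 D (X k) := by
  choose M hM using hK
  have hpos : ∀ᶠ k in l, ∀ q : Q0 D xb, 0 < (M k).mpocCoeff D (t k) (X k) (Y k) (.ineq q) :=
    eventually_all.2 fun q => (tendsto_mpocCoeff hM hconv hstat hlicq
      (by simp [mpocActive])).eventually_const_lt (hmu q q.2)
  filter_upwards [hpos, hconv.eventually (eventually_activeSubset D xb yb)] with k hpos hact
  refine Subset.antisymm (fun q hq => ?_) hact.Q0_subset
  by_contra hinactive
  simpa [SMult.mpocCoeff, hinactive] using hpos ⟨q, hq⟩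

/-- Lemma 3a: if KKT points of S(t_k) converge to a
nondegenerate T-stationary point of R, then eventually Q0(x̄) = Q0(x^k). -/
theorem statement10 {n : ℕ} {P Q : Type*} [Fintype P] [Fintype Q]
    (D : Setting n P Q) (t : ℕ → ℝ) (htpos : ∀ k, 0 < t k)
    (ht0 : Filter.Tendsto t Filter.atTop (nhds 0))
    (X Y : ℕ → Vec n) (hK : ∀ k, KKT D (t k) (X k) (Y k))
    (xb yb : Vec n)
    (hconv : Filter.Tendsto (fun k => ((X k, Y k) : Vec n × Vec n))
      Filter.atTop (nhds (xb, yb)))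
    (Mb : TMult n P Q) (hnd : NondegTStatAt D xb yb Mb) :
    ∃ K : ℕ, ∀ k ≥ K, Q0 D xb = Q0 D (X k) := by
  exact eventually_atTop.1
    (statement10_general D t X Y hK xb yb hconv Mb hnd.1 hnd.2.1 hnd.2.2.1)

end Scholtes
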